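/- If a₁ and a₂ are real numbers with a₁ ≠ a₂ and a₁ ≠ -a₂, then the Painlevé II equations y'' = 2y³ + xy + a₁ and y'' = 2y³ + xy + a₂ are not point-equivalent. -/

import Mathlib

noncomputable def pdx (f : ℝ → ℝ → ℝ) (x y : ℝ) : ℝ := deriv (fun t => f t y) x
noncomputable def pdy (f : ℝ → ℝ → ℝ) (x y : ℝ) : ℝ := deriv (fun t => f x t) y

/-- `y` solves the Painlevé II equation with parameter `a` on the set `I`. -/
def SolvesPII (a : ℝ) (y : ℝ → ℝ) (I : Set ℝ) : Prop :=
  ∀ x ∈ I, deriv (deriv y) x = 2 * (y x) ^ 3 + x * y x + a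

/-- The Painlevé II equations with parameters `a₁`, `a₂` are point-equivalent:
there is a smooth point transformation (x,y) ↦ (X(x,y), Y(x,y)) with nonvanishing
Jacobian carrying every solution of the first equation to a solution of the second. -/
def PIIPointEquivalent (a₁ a₂ : ℝ) : Prop :=
  ∃ X Y : ℝ → ℝ → ℝ,
    ContDiff ℝ (⊤ : ℕ∞) (Function.uncurry X) ∧ ContDiff ℝ (⊤ : ℕ∞) (Function.uncurry Y) ∧
    (∀ x y, pdx X x y * pdy Y x y - pdy X x y * pdx Y x y ≠ 0) ∧
    ∀ (I : Set ℝ) (y : ℝ → ℝ), IsOpen I → ContDiffOn ℝ (⊤ : ℕ∞) y I → SolvesPII a₁ y I →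
      ∃ w : ℝ → ℝ, (∀ x ∈ I, w (X x (y x)) = Y x (y x)) ∧
        SolvesPII a₂ w ((fun x => X x (y x)) '' I)

/-!
Along a solution of `y'' = F(x, y)` a point transformation `(X, Y)` traces a curve `(u, v)` on the
graph of a solution of `w'' = G(u, w)`, and then `v'' u' - v' u'' = u' ^ 3 G(u, v)`. This holds even
where `u' = 0`, by continuity; as it is a linear equation for `u'` where `v' ≠ 0`, a zero of `u'`
there would make `u`, hence `v`, locally constant. So `u'` never vanishes. Since the `1`-jet of a
solution at a point is arbitrary, `X` depends on `x` only, and comparing powers of `y'` shows that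
`Y` is affine in `y`. For two Painlevé II equations, comparing powers of `y` then leaves only
`(x, y) ↦ (x, ± y)`, which multiplies the parameter by `± 1`: the invariant `|J| = |a|` is
preserved.
-/

open Filter Topology Set Function
open scoped ContDiff

section LocalExistence

variable {E : Type*} [NormedAddCommGroup E] [NormedSpace ℝ E]

theorem contDiffOn_of_hasDerivAt_comp {f : E → E} (hf : ContDiff ℝ ∞ f) {γ : ℝ → E} {I : Set ℝ}
    (hI : IsOpen I) (hγ : ∀ t ∈ I, HasDerivAt γ (f (γ t)) t) : ContDiffOn ℝ ∞ γ I := by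
  rw [contDiffOn_infty]
  intro n
  induction n with
  | zero => exact contDiffOn_zero.2 fun t ht => (hγ t ht).continuousAt.continuousWithinAt
  | succ n ih =>
    rw [Nat.cast_succ, contDiffOn_succ_iff_deriv_of_isOpen hI]
    refine ⟨fun t ht => (hγ t ht).differentiableAt.differentiableWithinAt, by simp, ?_⟩
    exact ((contDiff_infty.1 hf n).comp_contDiffOn ih).congr fun t ht => (hγ t ht).deriv

theorem exists_contDiffOn_deriv_deriv_eq [CompleteSpace E] {f : ℝ × E × E → E}
    (hf : ContDiff ℝ ∞ f) (t₀ : ℝ) (y₀ p₀ : E) :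
    ∃ (I : Set ℝ) (y : ℝ → E), IsOpen I ∧ t₀ ∈ I ∧ ContDiffOn ℝ ∞ y I ∧ y t₀ = y₀ ∧
      deriv y t₀ = p₀ ∧ ∀ t ∈ I, deriv (deriv y) t = f (t, y t, deriv y t) := by
  -- The equation becomes an autonomous first order system for `(t, y, y')`.
  let V : ℝ × E × E → ℝ × E × E := fun q => (1, q.2.2, f q)
  have hV : ContDiff ℝ ∞ V := by fun_prop
  obtain ⟨γ, hγ₀, ε, hε, hγ⟩ :=
    ((hV.of_le (by simp)).contDiffAt (x := (t₀, y₀, p₀)))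
      |>.exists_forall_mem_closedBall_exists_eq_forall_mem_Ioo_hasDerivAt₀ t₀
  set I := Ioo (t₀ - ε) (t₀ + ε)
  have ht₀ : t₀ ∈ I := ⟨by linarith, by linarith⟩
  have hτ : ∀ t ∈ I, HasDerivAt (fun s => (γ s).1) 1 t := fun t ht => (hγ t ht).fst
  have hy : ∀ t ∈ I, HasDerivAt (fun s => (γ s).2.1) (γ t).2.2 t := fun t ht => (hγ t ht).snd.fst
  have hp : ∀ t ∈ I, HasDerivAt (fun s => (γ s).2.2) (f (γ t)) t := fun t ht => (hγ t ht).snd.snd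
  have time_eq : EqOn (fun s => (γ s).1) id I :=
    isOpen_Ioo.eqOn_of_deriv_eq isPreconnected_Ioo
      (fun t ht => (hτ t ht).differentiableAt.differentiableWithinAt) differentiableOn_id
      (fun t ht => by rw [(hτ t ht).deriv, deriv_id]) ht₀ (by simp [hγ₀])
  refine ⟨I, fun t => (γ t).2.1, isOpen_Ioo, ht₀, ?_, by simp [hγ₀], ?_, fun t ht => ?_⟩
  · exact (contDiffOn_of_hasDerivAt_comp hV isOpen_Ioo hγ).snd.fst
  · rw [(hy t₀ ht₀).deriv, hγ₀]
  · have deriv_eq : deriv (fun s => (γ s).2.1) =ᶠ[𝓝 t] fun s => (γ s).2.2 := by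
      filter_upwards [isOpen_Ioo.mem_nhds ht] with s hs using (hy s hs).deriv
    have jet_eq : γ t = (t, (γ t).2.1, (γ t).2.2) := Prod.ext (time_eq ht) rfl
    rw [deriv_eq.deriv_eq, deriv_eq.self_of_nhds, (hp t ht).deriv, ← jet_eq]

end LocalExistence

section OneVariable

theorem hasDerivAt_of_comp_eventuallyEq {𝕜 E : Type*} [NontriviallyNormedField 𝕜]
    [CompleteSpace 𝕜] [NormedAddCommGroup E] [NormedSpace 𝕜 E] {u : 𝕜 → 𝕜} {v w : 𝕜 → E}
    {t u' : 𝕜} {v' : E} (hu : HasStrictDerivAt u u' t) (hu' : u' ≠ 0) (hv : HasDerivAt v v' t)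
    (hw : w ∘ u =ᶠ[𝓝 t] v) : HasDerivAt w (u'⁻¹ • v') (u t) := by
  set g := hu.localInverse u u' t hu'
  have hg : HasDerivAt g u'⁻¹ (u t) := (hu.to_localInverse hu').hasDerivAt
  have hgt : g (u t) = t := (hu.eventually_left_inverse hu').self_of_nhds
  have hwv : w =ᶠ[𝓝 (u t)] v ∘ g := by
    have hg_tendsto : Tendsto g (𝓝 (u t)) (𝓝 t) := by simpa only [hgt] using hg.continuousAt.tendsto
    filter_upwards [hu.eventually_right_inverse hu', hg_tendsto.eventually hw] with x hx hwx
    rw [comp_apply, ← hwx, comp_apply, hx]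
  rw [← hgt] at hv
  exact (hv.scomp (u t) hg).congr_of_eventuallyEq hwv

theorem eventuallyEq_zero_of_hasDerivAt_smul {E : Type*} [NormedAddCommGroup E] [NormedSpace ℝ E]
    {g : ℝ → E} {h : ℝ → ℝ} {t : ℝ} (hh : ContinuousAt h t)
    (hg : ∀ᶠ s in 𝓝 t, HasDerivAt g (h s • g s) s) (hgt : g t = 0) : g =ᶠ[𝓝 t] 0 := by
  refine ODE_solution_unique_of_eventually (v := fun s x => h s • x) (s := fun _ => univ)
    (K := ‖h t‖₊ + 1) ?_ (hg.mono fun s hs => ⟨hs, trivial⟩)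
    (.of_forall fun s => ⟨by simp, trivial⟩) hgt
  filter_upwards [hh.nnnorm.eventually (gt_mem_nhds (lt_add_one _))] with s hs
  exact ((lipschitzWith_smul (h s)).weaken hs.le).lipschitzOnWith

theorem cubic_coeff_eq_zero {R : Type*} [CommRing R] [IsDomain R] [Infinite R] {a b c d : R}
    (h : ∀ x, a * x ^ 3 + b * x ^ 2 + c * x + d = 0) : a = 0 ∧ b = 0 ∧ c = 0 ∧ d = 0 := by
  have : (⟨a, b, c, d⟩ : Cubic R) = 0 :=
    (Cubic.toPoly_eq_zero_iff _).1 (Polynomial.funext fun x => by simpa [Cubic.toPoly] using h x)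
  exact Cubic.ext_iff.1 this

theorem eq_affine_of_deriv_deriv_eq_zero {𝕜 : Type*} [RCLike 𝕜] {f : 𝕜 → 𝕜}
    (hf : Differentiable 𝕜 f) (hf' : Differentiable 𝕜 (deriv f))
    (h : ∀ x, deriv (deriv f) x = 0) (x : 𝕜) : f x = deriv f 0 * x + f 0 := by
  have hlin (t : 𝕜) : HasDerivAt (fun s => f s - deriv f 0 * s) 0 t := by
    have := (hf t).hasDerivAt.fun_sub ((hasDerivAt_id t).const_mul (deriv f 0))
    simpa [is_const_of_deriv_eq_zero hf' h t 0] using this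
  have := is_const_of_deriv_eq_zero (fun t => (hlin t).differentiableAt)
    (fun t => (hlin t).deriv) x 0
  linear_combination this

end OneVariable

section PartialDerivatives

variable {F : ℝ → ℝ → ℝ}

theorem pdx_eq_fderiv {x y : ℝ} (hF : DifferentiableAt ℝ (uncurry F) (x, y)) :
    pdx F x y = fderiv ℝ (uncurry F) (x, y) (1, 0) :=
  (hF.hasFDerivAt.comp_hasDerivAt (f := fun t => (t, y)) x
    ((hasDerivAt_id x).prodMk (hasDerivAt_const x y))).deriv

theorem pdy_eq_fderiv {x y : ℝ} (hF : DifferentiableAt ℝ (uncurry F) (x, y)) :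
    pdy F x y = fderiv ℝ (uncurry F) (x, y) (0, 1) :=
  (hF.hasFDerivAt.comp_hasDerivAt (f := fun t => (x, t)) y
    ((hasDerivAt_const y x).prodMk (hasDerivAt_id y))).deriv

theorem contDiff_pdx {m n : WithTop ℕ∞} (hF : ContDiff ℝ n (uncurry F)) (hmn : m + 1 ≤ n) :
    ContDiff ℝ m (uncurry (pdx F)) := by
  have hdiff : Differentiable ℝ (uncurry F) :=
    (hF.of_le (le_add_self.trans hmn)).differentiable one_ne_zero
  have hpdx : uncurry (pdx F) = fun q => fderiv ℝ (uncurry F) q (1, 0) :=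
    funext fun q => pdx_eq_fderiv (hdiff q)
  rw [hpdx]
  exact (hF.fderiv_right hmn).clm_apply contDiff_const

theorem contDiff_pdy {m n : WithTop ℕ∞} (hF : ContDiff ℝ n (uncurry F)) (hmn : m + 1 ≤ n) :
    ContDiff ℝ m (uncurry (pdy F)) := by
  have hdiff : Differentiable ℝ (uncurry F) :=
    (hF.of_le (le_add_self.trans hmn)).differentiable one_ne_zero
  have hpdy : uncurry (pdy F) = fun q => fderiv ℝ (uncurry F) q (0, 1) :=
    funext fun q => pdy_eq_fderiv (hdiff q)
  rw [hpdy]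
  exact (hF.fderiv_right hmn).clm_apply contDiff_const

/-- The total derivative `D F = F_x + p F_y`: the derivative of `x ↦ F x (y x)` in terms of the
`1`-jet `(x, y, p)` of `y`. -/
noncomputable def totalDeriv (F : ℝ → ℝ → ℝ) (x y p : ℝ) : ℝ := pdx F x y + p * pdy F x y

/-- The second total derivative `D² F`: the second derivative of `x ↦ F x (y x)` in terms of the
`2`-jet `(x, y, p, q)` of `y`. -/
noncomputable def totalDeriv₂ (F : ℝ → ℝ → ℝ) (x y p q : ℝ) : ℝ :=
  totalDeriv (pdx F) x y p + (q * pdy F x y + p * totalDeriv (pdy F) x y p)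

variable {y : ℝ → ℝ}

theorem hasDerivAt_comp_graph {t p : ℝ} (hF : DifferentiableAt ℝ (uncurry F) (t, y t))
    (hy : HasDerivAt y p t) : HasDerivAt (fun s => F s (y s)) (totalDeriv F t (y t) p) t := by
  have h := hF.hasFDerivAt.comp_hasDerivAt (f := fun s => (s, y s)) t ((hasDerivAt_id t).prodMk hy)
  have hjet : ((1 : ℝ), p) = (1, 0) + p • (0, 1) := by simp
  rwa [hjet, map_add, map_smul, ← pdx_eq_fderiv hF, ← pdy_eq_fderiv hF] at h

theorem deriv_deriv_comp_graph {I : Set ℝ} (hF : ContDiff ℝ 2 (uncurry F)) (hI : IsOpen I)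
    (hy : ContDiffOn ℝ 2 y I) {t : ℝ} (ht : t ∈ I) :
    deriv (deriv fun s => F s (y s)) t
      = totalDeriv₂ F t (y t) (deriv y t) (deriv (deriv y) t) := by
  have hF₁ : Differentiable ℝ (uncurry F) := hF.differentiable two_ne_zero
  have hFx := (contDiff_pdx hF one_add_one_eq_two.le).differentiable one_ne_zero
  have hFy := (contDiff_pdy hF one_add_one_eq_two.le).differentiable one_ne_zero
  have hasDerivAt_y {s : ℝ} (hs : s ∈ I) : HasDerivAt y (deriv y s) s :=
    ((hy.contDiffAt (hI.mem_nhds hs)).differentiableAt two_ne_zero).hasDerivAt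
  have hasDerivAt_y' : HasDerivAt (deriv y) (deriv (deriv y) t) t :=
    (((hy.deriv_of_isOpen hI one_add_one_eq_two.le).contDiffAt (hI.mem_nhds ht)).differentiableAt
      one_ne_zero).hasDerivAt
  have hderiv : deriv (fun s => F s (y s)) =ᶠ[𝓝 t]
      fun s => pdx F s (y s) + deriv y s * pdy F s (y s) := by
    filter_upwards [hI.mem_nhds ht] with s hs
    exact (hasDerivAt_comp_graph (hF₁ _) (hasDerivAt_y hs)).deriv
  have hx := hasDerivAt_comp_graph (hFx _) (hasDerivAt_y ht)
  have hy := hasDerivAt_comp_graph (hFy _) (hasDerivAt_y ht)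
  rw [hderiv.deriv_eq, (hx.fun_add (hasDerivAt_y'.fun_mul hy)).deriv, totalDeriv₂]

theorem totalDeriv_const_right (ξ : ℝ → ℝ) (x y p : ℝ) :
    totalDeriv (fun x _ => ξ x) x y p = deriv ξ x := by
  simp [totalDeriv, pdx, pdy]

theorem totalDeriv₂_const_right (ξ : ℝ → ℝ) (x y p q : ℝ) :
    totalDeriv₂ (fun x _ => ξ x) x y p q = deriv (deriv ξ) x := by
  simp [totalDeriv₂, totalDeriv, pdx, pdy]

section Affine

variable {α β : ℝ → ℝ}

theorem pdx_affine (hα : Differentiable ℝ α) (hβ : Differentiable ℝ β) :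
    pdx (fun x y => α x * y + β x) = fun x y => deriv α x * y + deriv β x := by
  funext x y
  exact (((hα x).hasDerivAt.mul_const y).add (hβ x).hasDerivAt).deriv

theorem pdy_affine : pdy (fun x y => α x * y + β x) = fun x _ => α x := by
  funext x y
  simp [pdy]

theorem totalDeriv_affine (hα : Differentiable ℝ α) (hβ : Differentiable ℝ β) (x y p : ℝ) :
    totalDeriv (fun x y => α x * y + β x) x y p = deriv α x * y + p * α x + deriv β x := by
  rw [totalDeriv, pdx_affine hα hβ, pdy_affine]
  ring

theorem totalDeriv₂_affine (hα : ContDiff ℝ 2 α) (hβ : ContDiff ℝ 2 β) (x y p q : ℝ) :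
    totalDeriv₂ (fun x y => α x * y + β x) x y p q
      = deriv (deriv α) x * y + 2 * p * deriv α x + q * α x + deriv (deriv β) x := by
  rw [totalDeriv₂, pdx_affine (hα.differentiable two_ne_zero) (hβ.differentiable two_ne_zero),
    pdy_affine, totalDeriv_affine hα.differentiable_deriv_two hβ.differentiable_deriv_two,
    totalDeriv_const_right]
  ring

end Affine

end PartialDerivatives

section SolutionCurves

/-- `y` solves the second order equation `y'' = F x y` on `I`. Equations in which `y'` does not
occur suffice here: the Painlevé II equation is of this form. -/
def SolvesODE (F : ℝ → ℝ → ℝ) (y : ℝ → ℝ) (I : Set ℝ) : Prop :=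
  ∀ x ∈ I, deriv (deriv y) x = F x (y x)

/-- The plane curve `(u, v)`, with parameter ranging over `I`, lies on the graph of a solution of
`w'' = G x w`. The parameter may be singular, and `w` is not assumed differentiable. -/
def ParametrizesSolution (G : ℝ → ℝ → ℝ) (u v : ℝ → ℝ) (I : Set ℝ) : Prop :=
  ∃ w : ℝ → ℝ, (∀ s ∈ I, w (u s) = v s) ∧ SolvesODE G w (u '' I)

namespace ParametrizesSolution

variable {G : ℝ → ℝ → ℝ} {u v : ℝ → ℝ} {I : Set ℝ} {t : ℝ}

theorem parametric_eq_of_deriv_ne_zero (h : ParametrizesSolution G u v I) (hI : IsOpen I)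
    (hu : ContDiffOn ℝ 2 u I) (hv : ContDiffOn ℝ 2 v I) (ht : t ∈ I) (hut : deriv u t ≠ 0) :
    deriv (deriv v) t * deriv u t - deriv v t * deriv (deriv u) t
      = deriv u t ^ 3 * G (u t) (v t) := by
  obtain ⟨w, hw, hODE⟩ := h
  have hasStrictDerivAt {f : ℝ → ℝ} (hf : ContDiffOn ℝ 1 f I) {s : ℝ} (hs : s ∈ I) :
      HasStrictDerivAt f (deriv f s) s :=
    (hf.contDiffAt (hI.mem_nhds hs)).hasStrictDerivAt one_ne_zero
  have hu₁ := hu.of_le one_le_two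
  have hv₁ := hv.of_le one_le_two
  have hu' := hu.deriv_of_isOpen hI one_add_one_eq_two.le
  have hv' := hv.deriv_of_isOpen hI one_add_one_eq_two.le
  have deriv_w {s : ℝ} (hs : s ∈ I) (hus : deriv u s ≠ 0) :
      deriv w (u s) = (deriv u s)⁻¹ • deriv v s :=
    (hasDerivAt_of_comp_eventuallyEq (hasStrictDerivAt hu₁ hs) hus
      (hasStrictDerivAt hv₁ hs).hasDerivAt
      (by filter_upwards [hI.mem_nhds hs] with r hr using hw r hr)).deriv
  have deriv_w_comp : deriv w ∘ u =ᶠ[𝓝 t] fun s => (deriv u s)⁻¹ • deriv v s := by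
    have hne := (hu'.continuousOn.continuousAt (hI.mem_nhds ht)).eventually_ne hut
    filter_upwards [hI.mem_nhds ht, hne] with s hs hus using deriv_w hs hus
  have hu'' := (hasStrictDerivAt hu' ht).hasDerivAt
  have hv'' := (hasStrictDerivAt hv' ht).hasDerivAt
  have deriv_deriv_w := (hasDerivAt_of_comp_eventuallyEq (hasStrictDerivAt hu₁ ht) hut
    ((hu''.fun_inv hut).fun_smul hv'') deriv_w_comp).deriv
  rw [hODE _ (mem_image_of_mem u ht), hw t ht] at deriv_deriv_w
  simp only [smul_eq_mul] at deriv_deriv_w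
  rw [deriv_deriv_w]
  field_simp
  ring

theorem parametric_eq (h : ParametrizesSolution G u v I) (hG : Continuous (uncurry G))
    (hI : IsOpen I) (hu : ContDiffOn ℝ 2 u I) (hv : ContDiffOn ℝ 2 v I) (ht : t ∈ I) :
    deriv (deriv v) t * deriv u t - deriv v t * deriv (deriv u) t
      = deriv u t ^ 3 * G (u t) (v t) := by
  by_cases hreg : ∃ᶠ s in 𝓝 t, deriv u s ≠ 0
  · -- `t` is a limit of regular parameters, so the identity passes to the limit.
    have hu' := hu.deriv_of_isOpen hI one_add_one_eq_two.le
    have hv' := hv.deriv_of_isOpen hI one_add_one_eq_two.le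
    have tendsto {f : ℝ → ℝ} (hf : ContinuousOn f I) : Tendsto f (𝓝 t) (𝓝 (f t)) :=
      hf.continuousAt (hI.mem_nhds ht)
    have hu₀ := tendsto hu.continuousOn
    have hv₀ := tendsto hv.continuousOn
    have hu₁ := tendsto hu'.continuousOn
    have hv₁ := tendsto hv'.continuousOn
    have hu₂ := tendsto (hu'.continuousOn_deriv_of_isOpen hI le_rfl)
    have hv₂ := tendsto (hv'.continuousOn_deriv_of_isOpen hI le_rfl)
    have hGuv := (hG.tendsto (u t, v t)).comp (hu₀.prodMk_nhds hv₀)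
    refine tendsto_nhds_unique_of_frequently_eq ((hv₂.mul hu₁).sub (hv₁.mul hu₂))
      ((hu₁.pow 3).mul hGuv) ((hreg.and_eventually (hI.mem_nhds ht)).mono fun s hs => ?_)
    exact h.parametric_eq_of_deriv_ne_zero hI hu hv hs.2 hs.1
  · have hu' : deriv u =ᶠ[𝓝 t] fun _ => 0 := by simpa [EventuallyEq] using hreg
    rw [hu'.deriv_eq, hu'.self_of_nhds, deriv_const]
    ring

theorem deriv_fst_ne_zero (h : ParametrizesSolution G u v I) (hG : Continuous (uncurry G))
    (hI : IsOpen I) (hu : ContDiffOn ℝ 2 u I) (hv : ContDiffOn ℝ 2 v I) (ht : t ∈ I)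
    (hvt : deriv v t ≠ 0) : deriv u t ≠ 0 := by
  intro hut
  have hIt := hI.mem_nhds ht
  have hu' := hu.deriv_of_isOpen hI one_add_one_eq_two.le
  have hv' := hv.deriv_of_isOpen hI one_add_one_eq_two.le
  have cv' := hv'.continuousOn.continuousAt hIt
  -- Solving the parametric equation for `u''` gives a linear equation `u'' = k u'` near `t`.
  let k : ℝ → ℝ := fun s => (deriv (deriv v) s - deriv u s ^ 2 * G (u s) (v s)) / deriv v s
  have hk : ContinuousAt k t := by
    have cuv : ContinuousAt (fun s => (u s, v s)) t :=
      (hu.continuousOn.continuousAt hIt).prodMk (hv.continuousOn.continuousAt hIt)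
    have cG : ContinuousAt (fun s => G (u s) (v s)) t := hG.continuousAt.comp cuv
    have cu' := hu'.continuousOn.continuousAt hIt
    have cv'' := (hv'.continuousOn_deriv_of_isOpen hI le_rfl).continuousAt hIt
    exact (cv''.sub ((cu'.pow 2).mul cG)).div cv' hvt
  have u'_eq_zero : deriv u =ᶠ[𝓝 t] 0 := by
    refine eventuallyEq_zero_of_hasDerivAt_smul hk ?_ hut
    filter_upwards [hIt, cv'.eventually_ne hvt] with s hs hvs
    have hu'' : deriv (deriv u) s = k s • deriv u s := by
      simp only [k, smul_eq_mul]
      field_simp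
      linear_combination -h.parametric_eq hG hI hu hv hs
    rw [← hu'']
    exact ((hu'.contDiffAt (hI.mem_nhds hs)).differentiableAt one_ne_zero).hasDerivAt
  have u_eq_const : (fun s => u s - u t) =ᶠ[𝓝 t] 0 := by
    refine eventuallyEq_zero_of_hasDerivAt_smul (h := 0) continuousAt_const ?_ (sub_self _)
    filter_upwards [hIt, u'_eq_zero] with s hs hus
    have hs' := ((hu.contDiffAt (hI.mem_nhds hs)).differentiableAt two_ne_zero).hasDerivAt
    simpa [hus] using hs'.sub_const (u t)
  obtain ⟨w, hw, -⟩ := h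
  have v_eq_const : v =ᶠ[𝓝 t] fun _ => w (u t) := by
    filter_upwards [hIt, u_eq_const] with s hs hus
    rw [← hw s hs, sub_eq_zero.1 hus]
  exact hvt (by rw [v_eq_const.deriv_eq, deriv_const])

end ParametrizesSolution

end SolutionCurves

section PointEquivalence

/-- `(x, y) ↦ (X x y, Y x y)` is a smooth point transformation, with nonvanishing Jacobian, carrying
the solutions of `y'' = F x y` into solutions of `w'' = G x w`. -/
structure IsPointEquivalence (F G X Y : ℝ → ℝ → ℝ) : Prop where
  smooth_fst : ContDiff ℝ ∞ (uncurry X)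
  smooth_snd : ContDiff ℝ ∞ (uncurry Y)
  jacobian_ne_zero : ∀ x y, pdx X x y * pdy Y x y - pdy X x y * pdx Y x y ≠ 0
  parametrizesSolution : ∀ (I : Set ℝ) (y : ℝ → ℝ), IsOpen I → ContDiffOn ℝ ∞ y I →
    SolvesODE F y I → ParametrizesSolution G (fun x => X x (y x)) (fun x => Y x (y x)) I

namespace IsPointEquivalence

variable {F G X Y : ℝ → ℝ → ℝ}

theorem exists_curve_of_jet (h : IsPointEquivalence F G X Y) (hF : ContDiff ℝ ∞ (uncurry F))
    (x y p : ℝ) :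
    ∃ (I : Set ℝ) (u v : ℝ → ℝ), IsOpen I ∧ x ∈ I ∧ ContDiffOn ℝ 2 u I ∧ ContDiffOn ℝ 2 v I ∧
      ParametrizesSolution G u v I ∧
      (u x = X x y ∧ deriv u x = totalDeriv X x y p ∧
        deriv (deriv u) x = totalDeriv₂ X x y p (F x y)) ∧
      (v x = Y x y ∧ deriv v x = totalDeriv Y x y p ∧
        deriv (deriv v) x = totalDeriv₂ Y x y p (F x y)) := by
  have hF' : ContDiff ℝ ∞ (fun q : ℝ × ℝ × ℝ => F q.1 q.2.1) :=
    hF.comp (contDiff_fst.prodMk contDiff_snd.fst)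
  obtain ⟨I, η, hI, hx, hη, rfl, rfl, hODE⟩ := exists_contDiffOn_deriv_deriv_eq hF' x y p
  have hη₂ : ContDiffOn ℝ 2 η I := contDiffOn_infty.1 hη 2
  have contDiffOn_comp_graph {Z : ℝ → ℝ → ℝ} (hZ : ContDiff ℝ ∞ (uncurry Z)) :
      ContDiffOn ℝ 2 (fun s => Z s (η s)) I :=
    (contDiff_infty.1 hZ 2).comp_contDiffOn (contDiffOn_id.prodMk hη₂)
  have jet_comp_graph {Z : ℝ → ℝ → ℝ} (hZ : ContDiff ℝ ∞ (uncurry Z)) :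
      deriv (fun s => Z s (η s)) x = totalDeriv Z x (η x) (deriv η x) ∧
        deriv (deriv fun s => Z s (η s)) x = totalDeriv₂ Z x (η x) (deriv η x) (F x (η x)) := by
    have hηx := ((hη₂.contDiffAt (hI.mem_nhds hx)).differentiableAt two_ne_zero).hasDerivAt
    refine ⟨(hasDerivAt_comp_graph (hZ.differentiable (by simp) _) hηx).deriv, ?_⟩
    rw [deriv_deriv_comp_graph (contDiff_infty.1 hZ 2) hI hη₂ hx, hODE x hx]
  exact ⟨I, _, _, hI, hx, contDiffOn_comp_graph h.smooth_fst, contDiffOn_comp_graph h.smooth_snd,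
    h.parametrizesSolution I η hI hη hODE, ⟨rfl, jet_comp_graph h.smooth_fst⟩,
    ⟨rfl, jet_comp_graph h.smooth_snd⟩⟩

theorem totalDeriv_fst_ne_zero (h : IsPointEquivalence F G X Y) (hF : ContDiff ℝ ∞ (uncurry F))
    (hG : Continuous (uncurry G)) (x y p : ℝ) : totalDeriv X x y p ≠ 0 := by
  obtain ⟨I, u, v, hI, hx, hu, hv, hcurve, ⟨-, hu', -⟩, ⟨-, hv', -⟩⟩ :=
    h.exists_curve_of_jet hF x y p
  intro hX
  have hY : totalDeriv Y x y p = 0 := by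
    by_contra hY
    exact hcurve.deriv_fst_ne_zero hG hI hu hv hx (hv'.trans_ne hY) (hu'.trans hX)
  apply h.jacobian_ne_zero x y
  unfold totalDeriv at hX hY
  linear_combination pdy Y x y * hX - pdy X x y * hY

theorem prolongation_eq (h : IsPointEquivalence F G X Y) (hF : ContDiff ℝ ∞ (uncurry F))
    (hG : Continuous (uncurry G)) (x y p : ℝ) :
    totalDeriv₂ Y x y p (F x y) * totalDeriv X x y p
        - totalDeriv Y x y p * totalDeriv₂ X x y p (F x y)
      = totalDeriv X x y p ^ 3 * G (X x y) (Y x y) := by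
  obtain ⟨I, u, v, hI, hx, hu, hv, hcurve, ⟨hu₀, hu₁, hu₂⟩, ⟨hv₀, hv₁, hv₂⟩⟩ :=
    h.exists_curve_of_jet hF x y p
  rw [← hu₀, ← hu₁, ← hu₂, ← hv₀, ← hv₁, ← hv₂]
  exact hcurve.parametric_eq hG hI hu hv hx

theorem pdy_fst_eq_zero (h : IsPointEquivalence F G X Y) (hF : ContDiff ℝ ∞ (uncurry F))
    (hG : Continuous (uncurry G)) (x y : ℝ) : pdy X x y = 0 := by
  by_contra hXy
  apply h.totalDeriv_fst_ne_zero hF hG x y (-pdx X x y / pdy X x y)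
  rw [totalDeriv, div_mul_cancel₀ _ hXy, add_neg_cancel]

theorem fst_eq_fst_zero (h : IsPointEquivalence F G X Y) (hF : ContDiff ℝ ∞ (uncurry F))
    (hG : Continuous (uncurry G)) : X = fun x _ => X x 0 := by
  funext x y
  have hX : Differentiable ℝ (X x) :=
    (h.smooth_fst.comp (contDiff_const.prodMk contDiff_id)).differentiable (by simp)
  exact is_const_of_deriv_eq_zero hX (h.pdy_fst_eq_zero hF hG x) y 0

theorem pdy_pdy_snd_eq_zero {ξ : ℝ → ℝ} (h : IsPointEquivalence F G (fun x _ => ξ x) Y)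
    (hF : ContDiff ℝ ∞ (uncurry F)) (hG : Continuous (uncurry G)) (x y : ℝ) :
    pdy (pdy Y) x y = 0 := by
  have hξ : deriv ξ x ≠ 0 := by
    simpa only [totalDeriv_const_right] using h.totalDeriv_fst_ne_zero hF hG x y 0
  -- Up to the factor `ξ'`, `pdy (pdy Y)` is the coefficient of `p ^ 2` in the prolongation.
  have hpoly (p : ℝ) := h.prolongation_eq hF hG x y p
  simp only [totalDeriv_const_right, totalDeriv₂_const_right] at hpoly
  unfold totalDeriv₂ totalDeriv at hpoly
  have hcoeff : pdy (pdy Y) x y * deriv ξ x = 0 := by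
    linear_combination (hpoly 1 - 2 * hpoly 0 + hpoly (-1)) / 2
  exact (mul_eq_zero.1 hcoeff).resolve_right hξ

theorem snd_eq_affine {ξ : ℝ → ℝ} (h : IsPointEquivalence F G (fun x _ => ξ x) Y)
    (hF : ContDiff ℝ ∞ (uncurry F)) (hG : Continuous (uncurry G)) :
    Y = fun x y => pdy Y x 0 * y + Y x 0 := by
  funext x
  have hY : ContDiff ℝ 2 (Y x) :=
    contDiff_infty.1 (h.smooth_snd.comp (contDiff_const.prodMk contDiff_id)) 2
  funext y
  exact eq_affine_of_deriv_deriv_eq_zero (hY.differentiable two_ne_zero)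
    (hY.differentiable_deriv_two) (h.pdy_pdy_snd_eq_zero hF hG x) y

section Affine

variable {ξ α β : ℝ → ℝ}

theorem exists_affine (h : IsPointEquivalence F G X Y) (hF : ContDiff ℝ ∞ (uncurry F))
    (hG : Continuous (uncurry G)) :
    ∃ ξ α β : ℝ → ℝ, ContDiff ℝ 2 ξ ∧ ContDiff ℝ 2 α ∧ ContDiff ℝ 2 β ∧
      X = (fun x _ => ξ x) ∧ Y = fun x y => α x * y + β x := by
  have slice {Z : ℝ → ℝ → ℝ} (hZ : ContDiff ℝ ∞ (uncurry Z)) : ContDiff ℝ 2 (fun x => Z x 0) :=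
    contDiff_infty.1 (hZ.comp (contDiff_id.prodMk contDiff_const)) 2
  have hX := h.fst_eq_fst_zero hF hG
  refine ⟨fun x => X x 0, fun x => pdy Y x 0, fun x => Y x 0, slice h.smooth_fst,
    slice (contDiff_pdy h.smooth_snd (by simp)), slice h.smooth_snd, hX, ?_⟩
  rw [hX] at h
  exact h.snd_eq_affine hF hG

variable (h : IsPointEquivalence F G (fun x _ => ξ x) fun x y => α x * y + β x)
  (hF : ContDiff ℝ ∞ (uncurry F)) (hG : Continuous (uncurry G))
include h

theorem linear_coeff_ne_zero (x : ℝ) : α x ≠ 0 := by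
  intro hαx
  apply h.jacobian_ne_zero x 0
  simp [pdy, hαx]

include hF hG

theorem deriv_fst_ne_zero (x : ℝ) : deriv ξ x ≠ 0 := by
  simpa only [totalDeriv_const_right] using h.totalDeriv_fst_ne_zero hF hG x 0 0

variable (hα : ContDiff ℝ 2 α) (hβ : ContDiff ℝ 2 β)
include hα hβ

theorem affine_prolongation_eq (x y p : ℝ) :
    (deriv (deriv α) x * y + 2 * p * deriv α x + F x y * α x + deriv (deriv β) x) * deriv ξ x
        - (deriv α x * y + p * α x + deriv β x) * deriv (deriv ξ) x
      = deriv ξ x ^ 3 * G (ξ x) (α x * y + β x) := by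
  have := h.prolongation_eq hF hG x y p
  rw [totalDeriv_const_right, totalDeriv₂_const_right, totalDeriv_affine
    (hα.differentiable two_ne_zero) (hβ.differentiable two_ne_zero),
    totalDeriv₂_affine hα hβ] at this
  exact this

theorem two_mul_deriv_linear_coeff_mul (x : ℝ) :
    2 * deriv α x * deriv ξ x = α x * deriv (deriv ξ) x := by
  linear_combination h.affine_prolongation_eq hF hG hα hβ x 0 1
    - h.affine_prolongation_eq hF hG hα hβ x 0 0

end Affine

end IsPointEquivalence

end PointEquivalence

section PainleveII

/-- The right-hand side of the Painlevé II equation `y'' = 2 y ^ 3 + x y + a`, so that `SolvesPII a`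
is definitionally `SolvesODE (painleveII a)`. -/
def painleveII (a x y : ℝ) : ℝ := 2 * y ^ 3 + x * y + a

theorem contDiff_painleveII (a : ℝ) : ContDiff ℝ ∞ (uncurry (painleveII a)) := by
  unfold painleveII
  simp only [uncurry_def]
  fun_prop

theorem deriv_eq_zero_of_mul_sq_eq_one {κ α : ℝ → ℝ} (hκ : Differentiable ℝ κ)
    (hα : Differentiable ℝ α) (hκα : ∀ x, (κ x * α x) ^ 2 = 1)
    (h : ∀ x, 2 * deriv α x * κ x = α x * deriv κ x) (x : ℝ) : deriv κ x = 0 ∧ deriv α x = 0 := by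
  have hne : κ x * α x ≠ 0 := fun h0 => by simpa [h0] using hκα x
  have hderiv : 2 * (κ x * α x) * (deriv κ x * α x + κ x * deriv α x) = 0 := by
    have hd := ((hκ x).hasDerivAt.fun_mul (hα x).hasDerivAt).fun_pow 2
    simp only [hκα] at hd
    simpa using hd.unique (hasDerivAt_const x 1)
  have hproduct : deriv κ x * α x + κ x * deriv α x = 0 :=
    (mul_eq_zero.1 hderiv).resolve_left (mul_ne_zero two_ne_zero hne)
  have hα' : deriv α x = 0 := by
    have : 3 * κ x * deriv α x = 0 := by linear_combination hproduct + h x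
    simpa [left_ne_zero_of_mul hne] using this
  refine ⟨?_, hα'⟩
  simpa [hα', right_ne_zero_of_mul hne] using hproduct

variable {a₁ a₂ : ℝ} {X Y : ℝ → ℝ → ℝ} {ξ α β : ℝ → ℝ}

theorem painleveII_determining_eqs
    (h : IsPointEquivalence (painleveII a₁) (painleveII a₂) (fun x _ => ξ x)
      fun x y => α x * y + β x)
    (hα : ContDiff ℝ 2 α) (hβ : ContDiff ℝ 2 β) (x : ℝ) :
    (deriv ξ x * α x) ^ 2 = 1 ∧ β x = 0 ∧
      (deriv (deriv α) x + x * α x) * deriv ξ x - deriv α x * deriv (deriv ξ) x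
        = deriv ξ x ^ 3 * (6 * α x * β x ^ 2 + ξ x * α x) ∧
      (a₁ * α x + deriv (deriv β) x) * deriv ξ x - deriv β x * deriv (deriv ξ) x
        = deriv ξ x ^ 3 * (2 * β x ^ 3 + ξ x * β x + a₂) := by
  have hF : ContDiff ℝ ∞ (uncurry (painleveII a₁)) := contDiff_painleveII a₁
  have hG : Continuous (uncurry (painleveII a₂)) := (contDiff_painleveII a₂).continuous
  have hξ' := h.deriv_fst_ne_zero hF hG x
  have hαx := h.linear_coeff_ne_zero x
  have hpoly (y : ℝ) : (2 * α x * deriv ξ x * (1 - (deriv ξ x * α x) ^ 2)) * y ^ 3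
      + (-6 * deriv ξ x ^ 3 * α x ^ 2 * β x) * y ^ 2
      + ((deriv (deriv α) x + x * α x) * deriv ξ x - deriv α x * deriv (deriv ξ) x
        - deriv ξ x ^ 3 * (6 * α x * β x ^ 2 + ξ x * α x)) * y
      + ((a₁ * α x + deriv (deriv β) x) * deriv ξ x - deriv β x * deriv (deriv ξ) x
        - deriv ξ x ^ 3 * (2 * β x ^ 3 + ξ x * β x + a₂)) = 0 := by
    have := h.affine_prolongation_eq hF hG hα hβ x y 0
    unfold painleveII at this
    linear_combination this
  obtain ⟨h₃, h₂, h₁, h₀⟩ := cubic_coeff_eq_zero hpoly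
  refine ⟨?_, ?_, sub_eq_zero.1 h₁, sub_eq_zero.1 h₀⟩
  · exact (sub_eq_zero.1 ((mul_eq_zero.1 h₃).resolve_left (by positivity))).symm
  · simpa [hξ', hαx] using h₂

theorem exists_const_coeffs_of_painleveII
    (h : IsPointEquivalence (painleveII a₁) (painleveII a₂) (fun x _ => ξ x)
      fun x y => α x * y + β x)
    (hξ : ContDiff ℝ 2 ξ) (hα : ContDiff ℝ 2 α) (hβ : ContDiff ℝ 2 β) :
    ∃ k ε : ℝ, (k * ε) ^ 2 = 1 ∧ deriv ξ = (fun _ => k) ∧ α = (fun _ => ε) ∧ β = (fun _ => 0) ∧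
      (∀ x, k ^ 2 * ξ x = x) ∧ k ^ 2 * a₂ = ε * a₁ := by
  have eqs := painleveII_determining_eqs h hα hβ
  have hξ' := hξ.differentiable_deriv_two
  have hα₁ := hα.differentiable two_ne_zero
  have derivs_eq_zero := deriv_eq_zero_of_mul_sq_eq_one hξ' hα₁ (fun x => (eqs x).1)
    (h.two_mul_deriv_linear_coeff_mul (contDiff_painleveII a₁) (contDiff_painleveII a₂).continuous
      hα hβ)
  obtain rfl : β = fun _ => 0 := funext fun x => (eqs x).2.1
  obtain ⟨ε, rfl⟩ : ∃ ε, α = fun _ => ε :=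
    ⟨α 0, funext fun x => is_const_of_deriv_eq_zero hα₁ (fun x => (derivs_eq_zero x).2) x 0⟩
  obtain ⟨k, hk⟩ : ∃ k, deriv ξ = fun _ => k :=
    ⟨deriv ξ 0, funext fun x => is_const_of_deriv_eq_zero hξ' (fun x => (derivs_eq_zero x).1) x 0⟩
  simp only [hk, deriv_const'] at eqs
  have hkε : k * ε ≠ 0 := fun h0 => by simpa [h0] using (eqs 0).1
  refine ⟨k, ε, (eqs 0).1, hk, rfl, rfl, fun x => mul_left_cancel₀ hkε ?_,
    mul_left_cancel₀ (left_ne_zero_of_mul hkε) ?_⟩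
  · linear_combination -(eqs x).2.2.1
  · linear_combination -(eqs 0).2.2.2

theorem painleveII_rigidity (h : IsPointEquivalence (painleveII a₁) (painleveII a₂) X Y) :
    ∃ ε : ℝ, |ε| = 1 ∧ X = (fun x _ => x) ∧ Y = (fun _ y => ε * y) ∧ a₂ = ε * a₁ := by
  obtain ⟨ξ, α, β, hξ, hα, hβ, rfl, rfl⟩ :=
    h.exists_affine (contDiff_painleveII a₁) (contDiff_painleveII a₂).continuous
  obtain ⟨k, ε, hkε, hk, rfl, rfl, k_sq_mul_ξ, k_sq_mul⟩ :=
    exists_const_coeffs_of_painleveII h hξ hα hβ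
  have k_eq_one : k = 1 := by
    have hd := (hξ.differentiable two_ne_zero 0).hasDerivAt.const_mul (k ^ 2)
    simp only [hk, k_sq_mul_ξ] at hd
    have k_cube : k ^ 3 = 1 := hd.unique (hasDerivAt_id 0)
    simpa [pow_eq_one_iff_of_ne_zero, Nat.even_iff] using k_cube
  subst k_eq_one
  simp only [one_pow, one_mul] at hkε k_sq_mul_ξ k_sq_mul
  have abs_ε : |ε| = 1 :=
    (pow_eq_one_iff_of_nonneg (abs_nonneg ε) two_ne_zero).1 (by rw [sq_abs, hkε])
  refine ⟨ε, abs_ε, ?_, ?_, k_sq_mul⟩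
  · funext x _
    exact k_sq_mul_ξ x
  · simp only [add_zero]

theorem PIIPointEquivalent.abs_eq (h : PIIPointEquivalent a₁ a₂) : |a₁| = |a₂| := by
  obtain ⟨X, Y, hX, hY, hJ, hXY⟩ := h
  obtain ⟨ε, hε, -, -, rfl⟩ := painleveII_rigidity ⟨hX, hY, hJ, hXY⟩
  rw [abs_mul, hε, one_mul]

end PainleveII

/-- Lemma 1: Painlevé II equations with parameters a₁ ≠ ±a₂
are not point-equivalent. -/
theorem stmt13 (a₁ a₂ : ℝ) (h₁ : a₁ ≠ a₂) (h₂ : a₁ ≠ -a₂) :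
    ¬ PIIPointEquivalent a₁ a₂ := by
  exact fun h => (abs_eq_abs.1 h.abs_eq).elim h₁ h₂
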